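/- For all sufficiently large n, the numbers 3n−4 and 4n−4 do not belong to L_n, the set of region counts of n distinct lines in the plane. -/

import Mathlib

noncomputable section

/-- The number of connected components of the complement of `S`. -/
def regionCount {X : Type*} [TopologicalSpace X] (S : Set X) : ℕ :=
  Nat.card (ConnectedComponents ↥(Sᶜ))

/-- A line in the plane `ℝ²`. -/
def IsLine (L : Set (ℝ × ℝ)) : Prop :=
  ∃ a b c : ℝ, (a, b) ≠ (0, 0) ∧ L = {p : ℝ × ℝ | a * p.1 + b * p.2 = c}

/-- A circle in the plane `ℝ²`. -/
def IsCircle (S : Set (ℝ × ℝ)) : Prop :=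
  ∃ (o : ℝ × ℝ) (r : ℝ), 0 < r ∧
    S = {p : ℝ × ℝ | (p.1 - o.1) ^ 2 + (p.2 - o.2) ^ 2 = r ^ 2}

/-- An arrangement of lines is in general position if every two lines meet
(no two parallel) and no three are concurrent. -/
def LinesGenPos {n : ℕ} (ℓ : Fin n → Set (ℝ × ℝ)) : Prop :=
  (∀ i j, i ≠ j → (ℓ i ∩ ℓ j).Nonempty) ∧
    (∀ i j k, i ≠ j → j ≠ k → i ≠ k → ℓ i ∩ ℓ j ∩ ℓ k = ∅)

/-- An arrangement of circles is in general position if every two circles cross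
in exactly two points and no three circles are concurrent. -/
def CirclesGenPos {n : ℕ} (c : Fin n → Set (ℝ × ℝ)) : Prop :=
  (∀ i j, i ≠ j → Nat.card ↥(c i ∩ c j) = 2) ∧
    (∀ i j k, i ≠ j → j ≠ k → i ≠ k → c i ∩ c j ∩ c k = ∅)

/-- `Lset n`: possible numbers of regions of `n` distinct lines in the plane. -/
def Lset (n : ℕ) : Set ℕ :=
  {f | ∃ ℓ : Fin n → Set (ℝ × ℝ), (∀ i, IsLine (ℓ i)) ∧ Function.Injective ℓ ∧
    f = regionCount (⋃ i, ℓ i)}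

/-- `Cset n`: possible numbers of regions of `n` distinct circles in the plane,
not in general position, every two of which share at least one point. -/
def Cset (n : ℕ) : Set ℕ :=
  {f | ∃ c : Fin n → Set (ℝ × ℝ), (∀ i, IsCircle (c i)) ∧ Function.Injective c ∧
    (∀ i j, i ≠ j → (c i ∩ c j).Nonempty) ∧ ¬ CirclesGenPos c ∧
    f = regionCount (⋃ i, c i)}

/-- Inversion of the plane with center `O` and radius `r`. -/
def inversion (O : ℝ × ℝ) (r : ℝ) (P : ℝ × ℝ) : ℝ × ℝ :=
  (O.1 + r ^ 2 * (P.1 - O.1) / ((P.1 - O.1) ^ 2 + (P.2 - O.2) ^ 2),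
   O.2 + r ^ 2 * (P.2 - O.2) / ((P.1 - O.1) ^ 2 + (P.2 - O.2) ^ 2))

/-!
Adding a line to an arrangement creates one more region than there are intersection points on the
new line. Suppose that `m` of the `n` lines are concurrent, or that `m - 1` of them are parallel
(which makes them a pencil of `m` lines once the line at infinity is adjoined), and let
`r = n + 1 - m`. Starting from this pencil and adding the other lines one at a time, one finds that
the number `f` of regions satisfies `m * (r + 1) ≤ f ≤ m * (r + 1) + r.choose 2`. For
`r = 0, 1, 2, 3` this leaves the values `n + 1`, `2n`, `3n - 3, 3n - 2` and `4n - 8, …, 4n - 5`,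
while for `r ≥ 4` and `m ≥ 9` it gives `f > 4n - 4`. If there is no such pencil with `m ≥ 9`, then
every line carries many intersection points and `f` grows quadratically in `n`.
-/

open Finset Module Topology

section Regions

variable {X : Type*} [TopologicalSpace X]

lemma regionCount_eq_card {α : Type*} {S : Set X} {I : Finset α} {U : α → Set X}
    (hopen : ∀ i ∈ I, IsOpen (U i)) (hconn : ∀ i ∈ I, IsConnected (U i))
    (hdisj : (I : Set α).PairwiseDisjoint U) (hunion : Sᶜ = ⋃ i ∈ I, U i) :
    regionCount S = #I := by
  let V : I → Set ↥Sᶜ := fun i => Subtype.val ⁻¹' U i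
  have hVopen (i : I) : IsOpen (V i) := (hopen i i.2).preimage continuous_subtype_val
  have hVdisj : Pairwise (Function.onFun Disjoint V) := fun i j hij =>
    (hdisj i.2 j.2 (Subtype.coe_injective.ne hij)).preimage _
  have hVunion : ⋃ i, V i = Set.univ := by
    refine Set.eq_univ_of_forall fun x => ?_
    obtain ⟨i, hi, hx⟩ := Set.mem_iUnion₂.1 (hunion.subset x.2)
    exact Set.mem_iUnion.2 ⟨⟨i, hi⟩, hx⟩
  have hVclopen (i : I) : IsClopen (V i) := by
    refine ⟨⟨?_⟩, hVopen i⟩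
    have hcompl : (V i)ᶜ = ⋃ j ≠ i, V j := by
      refine Set.Subset.antisymm (fun x hx => ?_)
        (Set.iUnion₂_subset fun j hj => (hVdisj hj).subset_compl_right)
      obtain ⟨j, hj⟩ := Set.iUnion_eq_univ_iff.1 hVunion x
      exact Set.mem_iUnion₂.2 ⟨j, fun hji => hx (hji ▸ hj), hj⟩
    exact hcompl ▸ isOpen_biUnion fun j _ => hVopen j
  have hVconn (i : I) : ConnectedSpace (V i) := by
    have hsub : U i ⊆ Sᶜ := hunion ▸ Set.subset_biUnion_of_mem (u := U) i.2
    have himage : Subtype.val '' V i = U i := by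
      rw [Subtype.image_preimage_coe, Set.inter_eq_right.2 hsub]
    rw [← isConnected_iff_connectedSpace, IsConnected, ← Set.image_nonempty,
      ← IsInducing.subtypeVal.isPreconnected_image, himage]
    exact hconn i i.2
  rw [regionCount, Nat.card_congr (ConnectedComponents.equivOfIsClopen hVclopen hVdisj hVunion),
    Nat.card_sigma]
  simp [Nat.card_unique]

lemma regionCount_empty [ConnectedSpace X] : regionCount (∅ : Set X) = 1 :=
  regionCount_eq_card (I := {()}) (U := fun _ => Set.univ)
    (by simp) (by simp [isConnected_univ]) (by simp) (by ext; simp)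

end Regions

section Hyperplanes

variable {E : Type*} [AddCommGroup E] [Module ℝ E] [TopologicalSpace E] {ι : Type*}

/-- The union of the hyperplanes `g i = 0` over `i ∈ S`. -/
def hyperplaneUnion (g : ι → E →ᴬ[ℝ] ℝ) (S : Finset ι) : Set E :=
  {p | ∃ i ∈ S, g i p = 0}

/-- The cell of the arrangement `(g i)`, `i ∈ S`, on which exactly the `g i` with `i ∈ T` are
positive and the others are negative. It may be empty. -/
def cell (g : ι → E →ᴬ[ℝ] ℝ) (S T : Finset ι) : Set E :=
  {p | ∀ i ∈ S, (i ∈ T → 0 < g i p) ∧ (i ∉ T → g i p < 0)}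

open scoped Classical in
/-- The number of nonempty cells; only `T ⊆ S` is allowed so that each cell has one label. -/
def cellCount (g : ι → E →ᴬ[ℝ] ℝ) (S : Finset ι) : ℕ :=
  #{T ∈ S.powerset | (cell g S T).Nonempty}

lemma isOpen_cell (g : ι → E →ᴬ[ℝ] ℝ) (S T : Finset ι) : IsOpen (cell g S T) := by
  simp only [cell, Set.ofPred_forall, Set.ofPred_and]
  exact isOpen_biInter_finset fun i _ =>
    (isOpen_iInter_of_finite fun _ => isOpen_lt continuous_const (g i).continuous).inter
      (isOpen_iInter_of_finite fun _ => isOpen_lt (g i).continuous continuous_const)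

lemma convex_cell (g : ι → E →ᴬ[ℝ] ℝ) (S T : Finset ι) : Convex ℝ (cell g S T) := by
  simp only [cell, Set.ofPred_forall, Set.ofPred_and]
  exact convex_iInter₂ fun i _ =>
    (convex_iInter fun _ => (convex_Ioi 0).affine_preimage (g i : E →ᵃ[ℝ] ℝ)).inter
      (convex_iInter fun _ => (convex_Iio 0).affine_preimage (g i : E →ᵃ[ℝ] ℝ))

lemma eq_of_mem_cell {g : ι → E →ᴬ[ℝ] ℝ} {S T T' : Finset ι} (hT : T ⊆ S) (hT' : T' ⊆ S) {p : E}
    (hp : p ∈ cell g S T) (hp' : p ∈ cell g S T') : T = T' := by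
  ext i
  by_cases hi : i ∈ S
  · have h := hp i hi
    have h' := hp' i hi
    constructor <;> intro hiT <;> by_contra hiT'
    · exact (h'.2 hiT').not_gt (h.1 hiT)
    · exact (h.2 hiT').not_gt (h'.1 hiT)
  · exact iff_of_false (fun hiT => hi (hT hiT)) fun hiT => hi (hT' hiT)

lemma compl_hyperplaneUnion (g : ι → E →ᴬ[ℝ] ℝ) (S : Finset ι) :
    (hyperplaneUnion g S)ᶜ = ⋃ T ∈ S.powerset, cell g S T := by
  classical
  ext p
  simp only [hyperplaneUnion, Set.mem_compl_iff, Set.mem_ofPred_eq, not_exists, not_and,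
    Set.mem_iUnion, exists_prop, mem_powerset]
  constructor
  · intro hp
    refine ⟨{i ∈ S | 0 < g i p}, filter_subset _ _, fun i hi => ?_⟩
    have := hp i hi
    grind
  · rintro ⟨T, -, hp⟩ i hi
    by_cases hiT : i ∈ T
    · exact ((hp i hi).1 hiT).ne'
    · exact ((hp i hi).2 hiT).ne

lemma cell_insert [DecidableEq ι] (g : ι → E →ᴬ[ℝ] ℝ) {S T : Finset ι} {j : ι}
    (hT : j ∉ T) : cell g (insert j S) T = {p ∈ cell g S T | g j p < 0} := by
  ext p
  simp only [cell, Set.mem_ofPred_eq]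
  grind

lemma cell_insert_insert [DecidableEq ι] (g : ι → E →ᴬ[ℝ] ℝ) {S : Finset ι} {j : ι} (hS : j ∉ S)
    (T : Finset ι) : cell g (insert j S) (insert j T) = {p ∈ cell g S T | 0 < g j p} := by
  ext p
  simp only [cell, Set.mem_ofPred_eq]
  grind

section ContinuousSMul

variable [ContinuousAdd E] [ContinuousSMul ℝ E]

theorem regionCount_hyperplaneUnion (g : ι → E →ᴬ[ℝ] ℝ) (S : Finset ι) :
    regionCount (hyperplaneUnion g S) = cellCount g S := by
  classical
  refine regionCount_eq_card (U := cell g S) (fun T _ => isOpen_cell g S T) ?_ ?_ ?_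
  · exact fun T hT => ⟨(mem_filter.1 hT).2, (convex_cell g S T).isPreconnected⟩
  · intro T hT T' hT' hne
    refine Set.disjoint_left.2 fun p hp hp' => hne (eq_of_mem_cell ?_ ?_ hp hp')
    · exact mem_powerset.1 (mem_filter.1 hT).1
    · exact mem_powerset.1 (mem_filter.1 hT').1
  · rw [compl_hyperplaneUnion]
    ext p
    simp only [Set.mem_iUnion, mem_filter]
    exact exists_congr fun T => ⟨fun ⟨hT, hp⟩ => ⟨⟨hT, p, hp⟩, hp⟩, fun ⟨hT, hp⟩ => ⟨hT.1, hp⟩⟩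

lemma exists_mem_eq_zero_of_convex {C : Set E} (hC : Convex ℝ C) (f : E →ᴬ[ℝ] ℝ)
    (hneg : ∃ p ∈ C, f p < 0) (hpos : ∃ p ∈ C, 0 < f p) : ∃ p ∈ C, f p = 0 := by
  obtain ⟨p, hp, hfp⟩ := hneg
  obtain ⟨q, hq, hfq⟩ := hpos
  exact hC.isPreconnected.intermediate_value hp hq f.continuous.continuousOn ⟨hfp.le, hfq.le⟩

end ContinuousSMul

variable [IsTopologicalAddGroup E] [ContinuousSMul ℝ E]

lemma exists_mem_neg_and_exists_mem_pos_of_isOpen {C : Set E} (hC : IsOpen C) {f : E →ᴬ[ℝ] ℝ}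
    (hf : f.contLinear ≠ 0) (hzero : ∃ p ∈ C, f p = 0) :
    (∃ p ∈ C, f p < 0) ∧ ∃ p ∈ C, 0 < f p := by
  obtain ⟨p, hp, hfp⟩ := hzero
  have hmap : IsOpenMap f :=
    AffineMap.isOpenMap_linear_iff.1 (f.contLinear.isOpenMap_of_ne_zero hf)
  have himage : f '' C ∈ 𝓝 0 := (hmap C hC).mem_nhds ⟨p, hp, hfp⟩
  obtain ⟨_, hneg, q, hq, rfl⟩ := ((frequently_lt_nhds (0 : ℝ)).and_eventually himage).exists
  obtain ⟨_, hpos, r, hr, rfl⟩ := ((frequently_gt_nhds (0 : ℝ)).and_eventually himage).exists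
  exact ⟨⟨q, hq, hneg⟩, ⟨r, hr, hpos⟩⟩

open scoped Classical in
lemma ite_exists_neg_add_ite_exists_pos {C : Set E} (hconv : Convex ℝ C) (hopen : IsOpen C)
    {f : E →ᴬ[ℝ] ℝ} (hf : f.contLinear ≠ 0) :
    ((if ∃ p ∈ C, f p < 0 then 1 else 0) + if ∃ p ∈ C, 0 < f p then 1 else 0 : ℕ) =
      (if C.Nonempty then 1 else 0) + if ∃ p ∈ C, f p = 0 then 1 else 0 := by
  have hboth : (∃ p ∈ C, f p = 0) ↔ (∃ p ∈ C, f p < 0) ∧ ∃ p ∈ C, 0 < f p :=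
    ⟨exists_mem_neg_and_exists_mem_pos_of_isOpen hopen hf,
      fun h => exists_mem_eq_zero_of_convex hconv f h.1 h.2⟩
  have heither : C.Nonempty ↔ (∃ p ∈ C, f p < 0) ∨ ∃ p ∈ C, 0 < f p := by
    constructor
    · rintro ⟨p, hp⟩
      rcases lt_trichotomy (f p) 0 with h | h | h
      · exact .inl ⟨p, hp, h⟩
      · exact .inl (hboth.1 ⟨p, hp, h⟩).1
      · exact .inr ⟨p, hp, h⟩
    · rintro (⟨p, hp, -⟩ | ⟨p, hp, -⟩) <;> exact ⟨p, hp⟩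
  rw [if_congr hboth rfl rfl, if_congr heither rfl rfl]
  by_cases hneg : ∃ p ∈ C, f p < 0 <;> by_cases hpos : ∃ p ∈ C, 0 < f p <;>
    simp only [hneg, hpos, and_self, and_true, and_false, or_self, or_true, or_false, if_true,
      if_false]

open scoped Classical in
lemma cellCount_insert [DecidableEq ι] (g : ι → E →ᴬ[ℝ] ℝ) {S : Finset ι} {j : ι} (hj : j ∉ S)
    (hg : (g j).contLinear ≠ 0) :
    cellCount g (insert j S) =
      cellCount g S + #{T ∈ S.powerset | ∃ p ∈ cell g S T, g j p = 0} := by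
  simp only [cellCount, card_filter, ← sum_add_distrib]
  rw [sum_powerset_insert hj, ← sum_add_distrib]
  refine sum_congr rfl fun T hT => ?_
  have hjT : j ∉ T := fun h => hj (mem_powerset.1 hT h)
  rw [cell_insert g hjT, cell_insert_insert g hj,
    ← ite_exists_neg_add_ite_exists_pos (convex_cell g S T) (isOpen_cell g S T) hg]
  rfl

variable {F : Type*} [AddCommGroup F] [Module ℝ F] [TopologicalSpace F] [ContinuousAdd F]
  [ContinuousSMul ℝ F]

-- Deletion-restriction: the cells that the new hyperplane cuts in two correspond under `φ` to the
-- cells of the arrangement induced on that hyperplane.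
theorem regionCount_hyperplaneUnion_insert [DecidableEq ι] (g : ι → E →ᴬ[ℝ] ℝ) {S : Finset ι}
    {j : ι} (hj : j ∉ S) (hg : (g j).contLinear ≠ 0) (φ : F →ᴬ[ℝ] E)
    (hφ : Set.range φ = {p | g j p = 0}) :
    regionCount (hyperplaneUnion g (insert j S)) =
      regionCount (hyperplaneUnion g S) + regionCount (φ ⁻¹' hyperplaneUnion g S) := by
  classical
  have hpre : φ ⁻¹' hyperplaneUnion g S = hyperplaneUnion (fun i => (g i).comp φ) S := rfl
  have hcell (T : Finset ι) :
      (∃ p ∈ cell g S T, g j p = 0) ↔ (cell (fun i => (g i).comp φ) S T).Nonempty := by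
    have hpre : cell (fun i => (g i).comp φ) S T = φ ⁻¹' cell g S T := rfl
    rw [hpre, ← Set.image_nonempty (f := φ), Set.image_preimage_eq_inter_range, hφ]
    rfl
  rw [hpre, regionCount_hyperplaneUnion, regionCount_hyperplaneUnion, regionCount_hyperplaneUnion]
  simpa only [cellCount, hcell] using cellCount_insert g hj hg

end Hyperplanes

section RealLine

theorem regionCount_finset_real (A : Finset ℝ) : regionCount (A : Set ℝ) = #A + 1 := by
  let g : ℝ → ℝ →ᴬ[ℝ] ℝ := fun a => ContinuousAffineMap.id ℝ ℝ - ContinuousAffineMap.const ℝ ℝ a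
  have hg (A : Finset ℝ) : hyperplaneUnion g A = A := by
    ext x
    simp [hyperplaneUnion, g, sub_eq_zero]
  induction A using Finset.induction_on with
  | empty => simp [regionCount_empty]
  | insert a A ha ih =>
    have hlin : (g a).contLinear ≠ 0 := by
      intro h
      have h10 := (g a).contLinear_map_vsub 1 0
      simp [h, g] at h10
    let φ : Unit →ᴬ[ℝ] ℝ := ContinuousAffineMap.const ℝ Unit a
    have hφ : Set.range φ = {x | g a x = 0} := by
      ext x
      simp [φ, g, sub_eq_zero, eq_comm]
    have hpre : φ ⁻¹' A = ∅ := by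
      exact Set.preimage_const_of_notMem ha
    rw [← hg, regionCount_hyperplaneUnion_insert g ha hlin φ hφ, hg, hpre, regionCount_empty,
      ih, card_insert_of_notMem ha]

end RealLine

namespace IsLine

variable {L M : Set (ℝ × ℝ)}

lemma exists_eq_setOf_eq_zero (hL : IsLine L) :
    ∃ g : ℝ × ℝ →ᴬ[ℝ] ℝ, g.contLinear ≠ 0 ∧ L = {p | g p = 0} := by
  obtain ⟨a, b, c, hab, rfl⟩ := hL
  let f : ℝ × ℝ →L[ℝ] ℝ := a • .fst ℝ ℝ ℝ + b • .snd ℝ ℝ ℝ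
  refine ⟨f.toContinuousAffineMap - .const ℝ (ℝ × ℝ) c, fun hf => hab ?_, ?_⟩
  · have ha : a = 0 := by simpa [f] using DFunLike.congr_fun hf (1, 0)
    have hb : b = 0 := by simpa [f] using DFunLike.congr_fun hf (0, 1)
    rw [ha, hb]
  · ext p
    simp [f, sub_eq_zero]

lemma exists_eq_affineSpan_pair (hL : IsLine L) : ∃ p q : ℝ × ℝ, p ≠ q ∧ L = line[ℝ, p, q] := by
  obtain ⟨a, b, c, hab, rfl⟩ := hL
  have hpos : a ^ 2 + b ^ 2 ≠ 0 := by
    contrapose! hab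
    exact Prod.ext (by nlinarith) (by nlinarith)
  let p : ℝ × ℝ := (c * a / (a ^ 2 + b ^ 2), c * b / (a ^ 2 + b ^ 2))
  refine ⟨p, p + (-b, a), ?_, ?_⟩
  · simpa [and_comm] using hab
  · ext ⟨x, y⟩
    simp only [Set.mem_ofPred_eq, SetLike.mem_coe, mem_affineSpan_pair_iff_exists_lineMap_eq]
    constructor
    · intro h
      refine ⟨(a * y - b * x) / (a ^ 2 + b ^ 2), ?_⟩
      have hx : (a * y - b * x) / (a ^ 2 + b ^ 2) * -b + c * a / (a ^ 2 + b ^ 2) = x := by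
        rw [← h]
        field_simp
        ring
      have hy : (a * y - b * x) / (a ^ 2 + b ^ 2) * a + c * b / (a ^ 2 + b ^ 2) = y := by
        rw [← h]
        field_simp
        ring
      simpa [AffineMap.lineMap_apply, p] using And.intro hx hy
    · rintro ⟨t, ht⟩
      have hx : t * -b + c * a / (a ^ 2 + b ^ 2) = x := by
        simpa [AffineMap.lineMap_apply, p] using congrArg Prod.fst ht
      have hy : t * a + c * b / (a ^ 2 + b ^ 2) = y := by
        simpa [AffineMap.lineMap_apply, p] using congrArg Prod.snd ht
      rw [← hx, ← hy]
      field_simp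
      ring

lemma coe_affineSpan (hL : IsLine L) : (affineSpan ℝ L : Set (ℝ × ℝ)) = L := by
  obtain ⟨p, q, -, rfl⟩ := hL.exists_eq_affineSpan_pair
  rw [AffineSubspace.affineSpan_coe]

lemma finrank_vectorSpan (hL : IsLine L) : finrank ℝ (vectorSpan ℝ L) = 1 := by
  obtain ⟨p, q, hpq, rfl⟩ := hL.exists_eq_affineSpan_pair
  rw [← direction_affineSpan, AffineSubspace.affineSpan_coe, direction_affineSpan,
    vectorSpan_pair, finrank_span_singleton (vsub_ne_zero.2 hpq)]

lemma eq_of_vectorSpan_eq (hL : IsLine L) (hM : IsLine M)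
    (hpar : vectorSpan ℝ L = vectorSpan ℝ M) (hmeet : (L ∩ M).Nonempty) : L = M := by
  rw [← hL.coe_affineSpan, ← hM.coe_affineSpan] at hmeet ⊢
  exact congrArg _ <| AffineSubspace.ext_of_direction_eq
    (by rwa [direction_affineSpan, direction_affineSpan]) hmeet

lemma exists_inter_eq_singleton (hL : IsLine L) (hM : IsLine M)
    (hpar : vectorSpan ℝ L ≠ vectorSpan ℝ M) : ∃ p, L ∩ M = {p} := by
  have hdisj : Disjoint (vectorSpan ℝ L) (vectorSpan ℝ M) :=
    (Submodule.isAtom_iff_finrank_eq_one.2 hL.finrank_vectorSpan).disjoint_of_ne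
      (Submodule.isAtom_iff_finrank_eq_one.2 hM.finrank_vectorSpan) hpar
  have hcompl : IsCompl (affineSpan ℝ L).direction (affineSpan ℝ M).direction := by
    rw [direction_affineSpan, direction_affineSpan, Submodule.isCompl_iff_disjoint]
    · exact hdisj
    · rw [hL.finrank_vectorSpan, hM.finrank_vectorSpan, finrank_prod, finrank_self]
  have hne {K : Set (ℝ × ℝ)} (hK : IsLine K) : (affineSpan ℝ K : Set (ℝ × ℝ)).Nonempty := by
    obtain ⟨p, q, -, rfl⟩ := hK.exists_eq_affineSpan_pair
    exact ⟨p, subset_affineSpan ℝ _ (left_mem_affineSpan_pair ℝ p q)⟩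
  simpa only [hL.coe_affineSpan, hM.coe_affineSpan] using
    AffineSubspace.inter_eq_singleton_of_nonempty_of_isCompl (hne hL) (hne hM) hcompl

lemma inter_subsingleton (hL : IsLine L) (hM : IsLine M) (hne : L ≠ M) :
    (L ∩ M).Subsingleton := by
  by_cases hpar : vectorSpan ℝ L = vectorSpan ℝ M
  · rw [Set.not_nonempty_iff_eq_empty.1 fun h => hne (hL.eq_of_vectorSpan_eq hM hpar h)]
    exact Set.subsingleton_empty
  · obtain ⟨p, hp⟩ := hL.exists_inter_eq_singleton hM hpar
    exact hp ▸ Set.subsingleton_singleton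

variable {S : Finset (Set (ℝ × ℝ))}

lemma finite_inter_sUnion (hL : IsLine L) (hS : ∀ M ∈ S, IsLine M) (hLS : L ∉ S) :
    (L ∩ ⋃₀ S).Finite := by
  rw [Set.sUnion_eq_biUnion, Set.inter_iUnion₂]
  exact S.finite_toSet.biUnion fun M hM =>
    (hL.inter_subsingleton (hS M hM) (ne_of_mem_of_not_mem hM hLS).symm).finite

lemma ncard_inter_sUnion_le (hL : IsLine L) (hS : ∀ M ∈ S, IsLine M) (hLS : L ∉ S) :
    (L ∩ ⋃₀ S).ncard ≤ #S := by
  rw [Set.sUnion_eq_biUnion, Set.inter_iUnion₂, card_eq_sum_ones]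
  refine (Finset.set_ncard_biUnion_le _ _).trans (sum_le_sum fun M hM => ?_)
  have hsub := hL.inter_subsingleton (hS M hM) (ne_of_mem_of_not_mem hM hLS).symm
  have := hsub.finite.to_subtype
  exact Set.ncard_le_one_iff_subsingleton.2 hsub

end IsLine

/-- The number of regions into which the lines in `S` divide the plane. -/
def numRegions (S : Finset (Set (ℝ × ℝ))) : ℕ :=
  regionCount (⋃₀ (S : Set (Set (ℝ × ℝ))))

theorem numRegions_insert [DecidableEq (Set (ℝ × ℝ))] {S : Finset (Set (ℝ × ℝ))}
    {L : Set (ℝ × ℝ)} (hL : IsLine L) (hS : ∀ M ∈ S, IsLine M) (hLS : L ∉ S) :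
    numRegions (insert L S) = numRegions S + (L ∩ ⋃₀ S).ncard + 1 := by
  choose! g hg0 hg using fun M => IsLine.exists_eq_setOf_eq_zero (L := M)
  have hunion {T : Finset (Set (ℝ × ℝ))} (hT : ∀ M ∈ T, IsLine M) :
      ⋃₀ T = hyperplaneUnion g T := by
    ext p
    refine exists_congr fun M => and_congr_right fun hM => ?_
    nth_rw 1 [hg M (hT M hM)]
    rfl
  obtain ⟨p, q, hpq, hLpq⟩ := hL.exists_eq_affineSpan_pair
  let φ : ℝ →ᴬ[ℝ] ℝ × ℝ := ContinuousAffineMap.lineMap p q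
  have hinj : Function.Injective φ := AffineMap.lineMap_injective ℝ hpq
  have hφ : Set.range φ = L := by
    ext x
    rw [hLpq]
    exact mem_affineSpan_pair_iff_exists_lineMap_eq.symm
  have himage : φ '' (φ ⁻¹' ⋃₀ S) = L ∩ ⋃₀ S := by
    rw [Set.image_preimage_eq_range_inter, hφ]
  have hfin : (φ ⁻¹' ⋃₀ S).Finite :=
    .of_finite_image (himage ▸ hL.finite_inter_sUnion hS hLS) hinj.injOn
  obtain ⟨A, hA⟩ := hfin.exists_finset_coe
  have hcard : (L ∩ ⋃₀ S).ncard = #A := by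
    rw [← himage, ← hA, Set.ncard_image_of_injective _ hinj, Set.ncard_coe_finset]
  rw [numRegions, numRegions, hunion (forall_mem_insert .. |>.2 ⟨hL, hS⟩), hcard,
    regionCount_hyperplaneUnion_insert g hLS (hg0 L hL) φ (hφ.trans (hg L hL)), ← hunion hS, ← hA,
    regionCount_finset_real, add_assoc]

section Arrangements

variable {S T U : Finset (Set (ℝ × ℝ))}

open scoped Classical in
/-- The lines of `S` through the point `p`. -/
def pencil (S : Finset (Set (ℝ × ℝ))) (p : ℝ × ℝ) : Finset (Set (ℝ × ℝ)) :=
  {L ∈ S | p ∈ L}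

open scoped Classical in
/-- The lines of `S` with direction `D`, where the direction of a line is its vector span. -/
def parallelClass (S : Finset (Set (ℝ × ℝ))) (D : Submodule ℝ (ℝ × ℝ)) : Finset (Set (ℝ × ℝ)) :=
  {L ∈ S | vectorSpan ℝ L = D}

lemma card_pencil_pencil_le_one (hS : ∀ L ∈ S, IsLine L) {p q : ℝ × ℝ} (hpq : p ≠ q) :
    #(pencil (pencil S p) q) ≤ 1 := by
  simp only [pencil, card_le_one, mem_filter, and_imp]
  intro L hL hpL hqL M hM hpM hqM
  by_contra hne
  exact hpq ((hS L hL).inter_subsingleton (hS M hM) hne ⟨hpL, hpM⟩ ⟨hqL, hqM⟩)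

lemma card_parallelClass_pencil_le_one (hS : ∀ L ∈ S, IsLine L) (p : ℝ × ℝ)
    (D : Submodule ℝ (ℝ × ℝ)) : #(parallelClass (pencil S p) D) ≤ 1 := by
  simp only [pencil, parallelClass, card_le_one, mem_filter, and_imp]
  intro L hL hpL hLD M hM hpM hMD
  exact (hS L hL).eq_of_vectorSpan_eq (hS M hM) (hLD.trans hMD.symm) ⟨p, hpL, hpM⟩

lemma pencil_parallelClass_comm (S : Finset (Set (ℝ × ℝ))) (D : Submodule ℝ (ℝ × ℝ))
    (p : ℝ × ℝ) : pencil (parallelClass S D) p = parallelClass (pencil S p) D := by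
  classical
  exact filter_comm ..

lemma IsLine.card_le_ncard_inter_mul_add {L : Set (ℝ × ℝ)} (hL : IsLine L)
    (hT : ∀ M ∈ T, IsLine M) (hLT : L ∉ T) {k : ℕ} (hk : ∀ p ∈ L, #(pencil T p) ≤ k) :
    #T ≤ (L ∩ ⋃₀ T).ncard * k + #(parallelClass T (vectorSpan ℝ L)) := by
  classical
  obtain ⟨A, hA⟩ := (hL.finite_inter_sUnion hT hLT).exists_finset_coe
  have hmem {p : ℝ × ℝ} (hp : p ∈ A) : p ∈ L ∩ ⋃₀ T := hA ▸ mem_coe.2 hp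
  have hcover : {M ∈ T | ¬ vectorSpan ℝ M = vectorSpan ℝ L} ⊆ A.biUnion (pencil T) := by
    intro M hM
    obtain ⟨hMT, hpar⟩ := mem_filter.1 hM
    obtain ⟨p, hp⟩ := hL.exists_inter_eq_singleton (hT M hMT) (Ne.symm hpar)
    obtain ⟨hpL, hpM⟩ : p ∈ L ∩ M := hp ▸ rfl
    have hpA : p ∈ A := by
      rw [← mem_coe, hA]
      exact ⟨hpL, M, hMT, hpM⟩
    exact mem_biUnion.2 ⟨p, hpA, mem_filter.2 ⟨hMT, hpM⟩⟩
  calc #T = #{M ∈ T | ¬ vectorSpan ℝ M = vectorSpan ℝ L} +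
        #(parallelClass T (vectorSpan ℝ L)) := by
        rw [add_comm, parallelClass, card_filter_add_card_filter_not]
    _ ≤ #A * k + #(parallelClass T (vectorSpan ℝ L)) := by
        gcongr
        exact (card_le_card hcover).trans <|
          card_biUnion_le_card_mul A (pencil T) k fun p hp => hk p (hmem hp).1
    _ = (L ∩ ⋃₀ T).ncard * k + #(parallelClass T (vectorSpan ℝ L)) := by
        rw [← hA, Set.ncard_coe_finset]

lemma numRegions_empty : numRegions ∅ = 1 := by
  rw [numRegions, coe_empty, Set.sUnion_empty, regionCount_empty]

lemma le_numRegions_union [DecidableEq (Set (ℝ × ℝ))] (hTU : ∀ L ∈ T ∪ U, IsLine L)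
    (hdisj : Disjoint T U) {w : ℕ} (hw : ∀ L ∈ U, w ≤ (L ∩ ⋃₀ T).ncard + 1) :
    numRegions T + #U * w ≤ numRegions (T ∪ U) := by
  induction U using Finset.induction_on with
  | empty => simp
  | insert L U hLU ih =>
    rw [union_insert, forall_mem_insert] at hTU
    rw [disjoint_insert_right] at hdisj
    rw [forall_mem_insert] at hw
    have hL : L ∉ T ∪ U := notMem_union.2 ⟨hdisj.1, hLU⟩
    have hmono : (L ∩ ⋃₀ T).ncard ≤ (L ∩ ⋃₀ (T ∪ U : Finset _)).ncard :=
      Set.ncard_le_ncard (by gcongr; exact subset_union_left)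
        (hTU.1.finite_inter_sUnion hTU.2 hL)
    have := ih hTU.2 hdisj.2 hw.2
    rw [union_insert, numRegions_insert hTU.1 hTU.2 hL, card_insert_of_notMem hLU]
    linarith [hw.1]

lemma numRegions_union_le [DecidableEq (Set (ℝ × ℝ))] (hTU : ∀ L ∈ T ∪ U, IsLine L)
    (hdisj : Disjoint T U) :
    numRegions (T ∪ U) ≤ numRegions T + #U * (#T + 1) + (#U).choose 2 := by
  induction U using Finset.induction_on with
  | empty => simp
  | insert L U hLU ih =>
    rw [union_insert, forall_mem_insert] at hTU
    rw [disjoint_insert_right] at hdisj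
    have hL : L ∉ T ∪ U := notMem_union.2 ⟨hdisj.1, hLU⟩
    have hncard := hTU.1.ncard_inter_sUnion_le hTU.2 hL
    rw [card_union_of_disjoint hdisj.2] at hncard
    have := ih hTU.2 hdisj.2
    rw [union_insert, numRegions_insert hTU.1 hTU.2 hL, card_insert_of_notMem hLU,
      Nat.choose_succ_succ' _ 1, Nat.choose_one_right]
    linarith

lemma numRegions_mem_Icc_of_subset [DecidableEq (Set (ℝ × ℝ))] (hS : ∀ L ∈ S, IsLine L)
    (hTS : T ⊆ S) {w : ℕ} (hw : ∀ L ∈ S \ T, w ≤ (L ∩ ⋃₀ T).ncard + 1) :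
    numRegions S ∈ Set.Icc (numRegions T + #(S \ T) * w)
      (numRegions T + #(S \ T) * (#T + 1) + (#(S \ T)).choose 2) := by
  have hunion : T ∪ S \ T = S := union_sdiff_of_subset hTS
  have hlower := le_numRegions_union (hunion.symm ▸ hS) disjoint_sdiff hw
  have hupper := numRegions_union_le (hunion.symm ▸ hS) (disjoint_sdiff (s := T) (t := S))
  rw [hunion] at hlower hupper
  exact ⟨hlower, hupper⟩

lemma numRegions_of_pairwiseDisjoint (hS : ∀ L ∈ S, IsLine L)
    (hdisj : (S : Set (Set (ℝ × ℝ))).PairwiseDisjoint id) : numRegions S = #S + 1 := by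
  classical
  induction S using Finset.induction_on with
  | empty => simp [numRegions_empty]
  | insert L S hLS ih =>
    rw [forall_mem_insert] at hS
    rw [coe_insert, Set.pairwiseDisjoint_insert_of_notMem (mem_coe.not.2 hLS)] at hdisj
    have hinter : L ∩ ⋃₀ S = ∅ := (Set.disjoint_sUnion_right.2 hdisj.2).inter_eq
    rw [numRegions_insert hS.1 hS.2 hLS, ih hS.2 hdisj.1, hinter, Set.ncard_empty,
      card_insert_of_notMem hLS]

lemma numRegions_of_forall_mem (hS : ∀ L ∈ S, IsLine L) (hne : S.Nonempty) {p : ℝ × ℝ}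
    (hp : ∀ L ∈ S, p ∈ L) : numRegions S = 2 * #S := by
  classical
  induction hne using Finset.Nonempty.cons_induction with
  | singleton L =>
    rw [numRegions_of_pairwiseDisjoint hS (by simp), card_singleton]
  | cons L S hLS hne ih =>
    rw [forall_mem_cons] at hS hp
    have hinter : L ∩ ⋃₀ S = {p} := by
      refine Set.Subset.antisymm ?_ ?_
      · rintro q ⟨hqL, M, hM, hqM⟩
        exact hS.1.inter_subsingleton (hS.2 M hM) (ne_of_mem_of_not_mem hM hLS).symm
          ⟨hqL, hqM⟩ ⟨hp.1, hp.2 M hM⟩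
      · obtain ⟨M, hM⟩ := hne
        exact Set.singleton_subset_iff.2 ⟨hp.1, M, hM, hp.2 M hM⟩
    rw [cons_eq_insert, numRegions_insert hS.1 hS.2 hLS, ih hS.2 hp.2, hinter,
      Set.ncard_singleton, card_insert_of_notMem hLS]
    ring

theorem exists_numRegions_mem_Icc_of_parallelClass (hS : ∀ L ∈ S, IsLine L)
    (D : Submodule ℝ (ℝ × ℝ)) :
    ∃ r, #(parallelClass S D) + r = #S ∧ numRegions S ∈
      Set.Icc ((#(parallelClass S D) + 1) * (r + 1))
        ((#(parallelClass S D) + 1) * (r + 1) + r.choose 2) := by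
  classical
  set T := parallelClass S D with hTdef
  have hTS : T ⊆ S := filter_subset _ _
  have hT : ∀ L ∈ T, IsLine L := fun L hL => hS L (hTS hL)
  have hfT : numRegions T = #T + 1 := by
    refine numRegions_of_pairwiseDisjoint hT fun L hL M hM hne => ?_
    refine Set.disjoint_iff_inter_eq_empty.2 (Set.not_nonempty_iff_eq_empty.1 fun h => hne ?_)
    exact (hT L hL).eq_of_vectorSpan_eq (hT M hM)
      ((mem_filter.1 hL).2.trans (mem_filter.1 hM).2.symm) h
  have hmeet : ∀ L ∈ S \ T, #T + 1 ≤ (L ∩ ⋃₀ T).ncard + 1 := by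
    intro L hL
    obtain ⟨hLS, hLT⟩ := mem_sdiff.1 hL
    have hLD : vectorSpan ℝ L ≠ D := fun h => hLT (mem_filter.2 ⟨hLS, h⟩)
    have hpar : parallelClass T (vectorSpan ℝ L) = ∅ :=
      filter_eq_empty_iff.2 fun M hM h => hLD (h.symm.trans (mem_filter.1 hM).2)
    have hcount := (hS L hLS).card_le_ncard_inter_mul_add hT hLT (k := 1) fun p _ => by
      rw [hTdef, pencil_parallelClass_comm]
      exact card_parallelClass_pencil_le_one hS p D
    simpa [hpar] using hcount
  obtain ⟨hlower, hupper⟩ := numRegions_mem_Icc_of_subset hS hTS hmeet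
  rw [hfT] at hlower hupper
  have hcard := card_sdiff_add_card_eq_card hTS
  exact ⟨#(S \ T), by lia, by linarith, by linarith⟩

theorem exists_numRegions_mem_Icc_of_pencil (hS : ∀ L ∈ S, IsLine L) {q : ℝ × ℝ}
    (hne : (pencil S q).Nonempty) :
    ∃ r, #(pencil S q) + r = #S + 1 ∧ numRegions S ∈
      Set.Icc (#(pencil S q) * (r + 1)) (#(pencil S q) * (r + 1) + r.choose 2) := by
  classical
  set T := pencil S q
  have hTS : T ⊆ S := filter_subset _ _
  have hT : ∀ L ∈ T, IsLine L := fun L hL => hS L (hTS hL)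
  have hfT : numRegions T = 2 * #T :=
    numRegions_of_forall_mem hT hne fun L hL => (mem_filter.1 hL).2
  have hmeet : ∀ L ∈ S \ T, #T ≤ (L ∩ ⋃₀ T).ncard + 1 := by
    intro L hL
    obtain ⟨hLS, hLT⟩ := mem_sdiff.1 hL
    have hcount := (hS L hLS).card_le_ncard_inter_mul_add hT hLT (k := 1) fun p hp =>
      card_pencil_pencil_le_one hS fun h => hLT (mem_filter.2 ⟨hLS, h ▸ hp⟩)
    have := card_parallelClass_pencil_le_one hS q (vectorSpan ℝ L)
    linarith
  obtain ⟨hlower, hupper⟩ := numRegions_mem_Icc_of_subset hS hTS hmeet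
  rw [hfT] at hlower hupper
  have hcard := card_sdiff_add_card_eq_card hTS
  refine ⟨#(S \ T) + 1, by lia, by linarith, ?_⟩
  rw [Nat.choose_succ_succ' _ 1, Nat.choose_one_right]
  linarith

-- In a subset `T` of `S`, at most `k` lines pass through any point of a line `L ∈ S \ T`, and fewer
-- than `k` are parallel to it, so that `L` has at least `(#T + 1) / k - 1` intersection points.
theorem card_mul_succ_le_mul_numRegions (hS : ∀ L ∈ S, IsLine L) {k : ℕ}
    (hpencil : ∀ p, #(pencil S p) ≤ k + 1) (hpar : ∀ D, #(parallelClass S D) ≤ k) :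
    2 * k + #S * (#S + 1) ≤ 2 * k * numRegions S := by
  classical
  induction S using Finset.induction_on with
  | empty => simp [numRegions_empty]
  | insert L S hLS ih =>
    rw [forall_mem_insert] at hS
    have hpencil' (p : ℝ × ℝ) : #(pencil S p) ≤ k + 1 :=
      (card_le_card (filter_subset_filter _ (subset_insert L S))).trans (hpencil p)
    have hpar' (D : Submodule ℝ (ℝ × ℝ)) : #(parallelClass S D) ≤ k :=
      (card_le_card (filter_subset_filter _ (subset_insert L S))).trans (hpar D)
    have hpencilL : ∀ p ∈ L, #(pencil S p) ≤ k := by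
      intro p hp
      have := hpencil p
      rw [pencil, filter_insert, if_pos hp,
        card_insert_of_notMem fun h => hLS (mem_filter.1 h).1] at this
      exact Nat.le_of_succ_le_succ this
    have hparL : #(parallelClass S (vectorSpan ℝ L)) + 1 ≤ k := by
      have := hpar (vectorSpan ℝ L)
      rwa [parallelClass, filter_insert, if_pos rfl,
        card_insert_of_notMem fun h => hLS (mem_filter.1 h).1] at this
    have hmeet := hS.1.card_le_ncard_inter_mul_add hS.2 hLS hpencilL
    rw [numRegions_insert hS.1 hS.2 hLS, card_insert_of_notMem hLS]
    linarith [ih hS.2 hpencil' hpar']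

lemma ne_of_mem_Icc_mul_add_choose {m r n f : ℕ} (hm : 9 ≤ m) (hmr : m + r = n + 1)
    (hf : f ∈ Set.Icc (m * (r + 1)) (m * (r + 1) + r.choose 2)) :
    f ≠ 3 * n - 4 ∧ f ≠ 4 * n - 4 := by
  obtain ⟨hlower, hupper⟩ := hf
  rcases lt_or_ge r 4 with hr | hr
  · interval_cases r <;> simp [Nat.choose] at hupper <;> omega
  · have : 4 * n < m * (r + 1) + 4 := by nlinarith
    omega

theorem numRegions_ne_three_mul_sub_four_and_four_mul_sub_four (hS : ∀ L ∈ S, IsLine L)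
    (hcard : 55 ≤ #S) :
    numRegions S ≠ 3 * #S - 4 ∧ numRegions S ≠ 4 * #S - 4 := by
  by_cases hpar : ∃ D, 8 ≤ #(parallelClass S D)
  · obtain ⟨D, hD⟩ := hpar
    obtain ⟨r, hr, hmem⟩ := exists_numRegions_mem_Icc_of_parallelClass hS D
    exact ne_of_mem_Icc_mul_add_choose (by lia) (by lia) hmem
  by_cases hpencil : ∃ p, 9 ≤ #(pencil S p)
  · obtain ⟨p, hp⟩ := hpencil
    obtain ⟨r, hr, hmem⟩ := exists_numRegions_mem_Icc_of_pencil hS (card_pos.1 (pos_of_gt hp))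
    exact ne_of_mem_Icc_mul_add_choose hp hr hmem
  push Not at hpar hpencil
  have := card_mul_succ_le_mul_numRegions hS (k := 7)
    (fun p => Nat.le_of_lt_succ (hpencil p)) fun D => Nat.le_of_lt_succ (hpar D)
  have : 4 * #S < numRegions S + 4 := by nlinarith
  omega

end Arrangements

/-- For all sufficiently large `n`, neither `3n - 4` nor `4n - 4` is a region
count of an arrangement of `n` distinct lines. -/
theorem stmt19 : ∃ N : ℕ, ∀ n ≥ N, 3 * n - 4 ∉ Lset n ∧ 4 * n - 4 ∉ Lset n := by
  refine ⟨55, fun n hn => ?_⟩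
  have hne : ∀ f ∈ Lset n, f ≠ 3 * n - 4 ∧ f ≠ 4 * n - 4 := by
    rintro f ⟨ℓ, hline, hinj, rfl⟩
    let S : Finset (Set (ℝ × ℝ)) := univ.map ⟨ℓ, hinj⟩
    have hcard : #S = n := by simp [S]
    have hunion : ⋃ i, ℓ i = ⋃₀ S := by simp [S, Set.sUnion_range]
    have hS : ∀ L ∈ S, IsLine L := by simpa [S] using hline
    have := numRegions_ne_three_mul_sub_four_and_four_mul_sub_four hS (hcard.symm ▸ hn)
    rwa [hcard, numRegions, ← hunion] at this
  exact ⟨fun h => (hne _ h).1 rfl, fun h => (hne _ h).2 rfl⟩
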